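/- For any w, w' ∈ ℝᵈ, writing σ² := Σ_{s,s'} D(s)·P(s,s')·‖g(w'; s, s')‖₂², it holds that Σ_{s,s'} D(s)·P(s,s')·‖g(w; s, s')‖₂² ≤ 2σ² + 8L²·Σ_s D(s)·⟨x(s), w' − w⟩². -/

import Mathlib

open scoped RealInnerProductSpace BigOperators
open Finset

/-- The per-sample TD update
`g(w; s, s') := (f(r(s,s') + γ⟨x(s'), w⟩) − f(⟨x(s), w⟩)) • x(s)`. -/
noncomputable def tdSample {S : Type*} {d : ℕ} (x : S → EuclideanSpace ℝ (Fin d))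
    (r : S → S → ℝ) (γ : ℝ) (f : ℝ → ℝ) (w : EuclideanSpace ℝ (Fin d)) (s s' : S) :
    EuclideanSpace ℝ (Fin d) :=
  (f (r s s' + γ * ⟪x s', w⟫) - f ⟪x s, w⟫) • x s

/-- The expected TD update `ḡ(w) := Σ_{s,s'} D(s) P(s,s') g(w; s, s')`. -/
noncomputable def tdExpected {S : Type*} [Fintype S] {d : ℕ} (D : S → ℝ) (P : S → S → ℝ)
    (x : S → EuclideanSpace ℝ (Fin d)) (r : S → S → ℝ) (γ : ℝ) (f : ℝ → ℝ)
    (w : EuclideanSpace ℝ (Fin d)) : EuclideanSpace ℝ (Fin d) :=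
  ∑ s, ∑ s', (D s * P s s') • tdSample x r γ f w s s'

/-!
If `f` is `K`-Lipschitz, `|γ| ≤ 1` and `‖x s‖ ≤ 1`, then moving the predicted values from `V'` to
`V` moves the update at `(s, s')` by at most `K (|V s - V' s| + |V s' - V' s'|)`. The inequality
`(a + b)² ≤ 2 (a² + b²)`, used for the update and for this bound, gives the coefficients `2` and
`4 K²`. Under the stationary law `D(s) P(s, s')` both `s` and `s'` are distributed as `D`, so the
two squared differences have the same average, which turns `4 K²` into `8 K²`.
-/

open scoped NNReal

section Transition

variable {S R : Type*} [Fintype S] [NonAssocSemiring R] {D : S → R} {P : S → S → R}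

lemma sum_sum_mul_of_row_sum_eq_one (hP : ∀ s, ∑ s', P s s' = 1) (φ : S → R) :
    ∑ s, ∑ s', D s * P s s' * φ s = ∑ s, D s * φ s :=
  sum_congr rfl fun s _ => by rw [← sum_mul, ← mul_sum, hP, mul_one]

lemma sum_sum_mul_of_stationary (hstat : ∀ s', ∑ s, D s * P s s' = D s') (φ : S → R) :
    ∑ s, ∑ s', D s * P s s' * φ s' = ∑ s, D s * φ s := by
  rw [sum_comm]
  exact sum_congr rfl fun s' _ => by rw [← sum_mul, hstat]

end Transition

section Update

variable {S E : Type*} [SeminormedAddCommGroup E] [NormedSpace ℝ E]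
  {x : S → E} {r : S → S → ℝ} {γ : ℝ} {f : ℝ → ℝ} {K : ℝ≥0}

/-- The temporal-difference error of the value function `V` on the transition from `s` to `s'`,
with both the bootstrapped target and the prediction passed through the link `f`. -/
def tdError (r : S → S → ℝ) (γ : ℝ) (f : ℝ → ℝ) (V : S → ℝ) (s s' : S) : ℝ :=
  f (r s s' + γ * V s') - f (V s)

/-- The per-sample TD update along `x` for a value function `V`. Since `V` is not required to be
linear in the features, the directions `x s` may lie in any normed space. -/
def tdUpdate (x : S → E) (r : S → S → ℝ) (γ : ℝ) (f : ℝ → ℝ) (V : S → ℝ) (s s' : S) : E :=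
  tdError r γ f V s s' • x s

lemma tdSample_eq_tdUpdate {d : ℕ} (x : S → EuclideanSpace ℝ (Fin d)) (r : S → S → ℝ) (γ : ℝ)
    (f : ℝ → ℝ) (w : EuclideanSpace ℝ (Fin d)) :
    tdSample x r γ f w = tdUpdate x r γ f (⟪x ·, w⟫) :=
  rfl

lemma abs_tdError_sub_le (hf : LipschitzWith K f) (V V' : S → ℝ) (s s' : S) :
    |tdError r γ f V s s' - tdError r γ f V' s s'| ≤
      K * (|V s - V' s| + |γ| * |V s' - V' s'|) := by
  have htarget : |f (r s s' + γ * V s') - f (r s s' + γ * V' s')| ≤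
      K * (|γ| * |V s' - V' s'|) := by
    simpa only [Real.dist_eq, add_sub_add_left_eq_sub, ← mul_sub, abs_mul] using
      hf.dist_le_mul (r s s' + γ * V s') (r s s' + γ * V' s')
  have hpred : |f (V s) - f (V' s)| ≤ K * |V s - V' s| := hf.dist_le_mul (V s) (V' s)
  calc |tdError r γ f V s s' - tdError r γ f V' s s'|
      = |(f (r s s' + γ * V s') - f (r s s' + γ * V' s')) - (f (V s) - f (V' s))| := by
        rw [tdError, tdError, sub_sub_sub_comm]
    _ ≤ |f (r s s' + γ * V s') - f (r s s' + γ * V' s')| + |f (V s) - f (V' s)| := abs_sub _ _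
    _ ≤ K * (|V s - V' s| + |γ| * |V s' - V' s'|) := by linarith

lemma norm_tdUpdate_sub_le (hf : LipschitzWith K f) (V V' : S → ℝ) (s s' : S) :
    ‖tdUpdate x r γ f V s s' - tdUpdate x r γ f V' s s'‖ ≤
      K * (|V s - V' s| + |γ| * |V s' - V' s'|) * ‖x s‖ := by
  rw [tdUpdate, tdUpdate, ← sub_smul, norm_smul, Real.norm_eq_abs]
  gcongr
  exact abs_tdError_sub_le hf V V' s s'

lemma norm_tdUpdate_sub_sq_le (hf : LipschitzWith K f) (hγ : |γ| ≤ 1) (V V' : S → ℝ) {s : S}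
    (hx : ‖x s‖ ≤ 1) (s' : S) :
    ‖tdUpdate x r γ f V s s' - tdUpdate x r γ f V' s s'‖ ^ 2 ≤
      2 * K ^ 2 * ((V' s - V s) ^ 2 + (V' s' - V s') ^ 2) :=
  calc ‖tdUpdate x r γ f V s s' - tdUpdate x r γ f V' s s'‖ ^ 2
      ≤ (K * (|V s - V' s| + |γ| * |V s' - V' s'|) * ‖x s‖) ^ 2 := by
        gcongr
        exact norm_tdUpdate_sub_le hf V V' s s'
    _ ≤ (K * (|V s - V' s| + 1 * |V s' - V' s'|) * 1) ^ 2 := by gcongr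
    _ = K ^ 2 * (|V' s - V s| + |V' s' - V s'|) ^ 2 := by
        rw [one_mul, mul_one, mul_pow, abs_sub_comm (V s), abs_sub_comm (V s')]
    _ ≤ K ^ 2 * (2 * (|V' s - V s| ^ 2 + |V' s' - V s'| ^ 2)) := by
        gcongr
        exact add_sq_le
    _ = 2 * K ^ 2 * ((V' s - V s) ^ 2 + (V' s' - V s') ^ 2) := by
        rw [sq_abs, sq_abs]
        ring

lemma norm_tdUpdate_sq_le (hf : LipschitzWith K f) (hγ : |γ| ≤ 1) (V V' : S → ℝ) {s : S}
    (hx : ‖x s‖ ≤ 1) (s' : S) :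
    ‖tdUpdate x r γ f V s s'‖ ^ 2 ≤ 2 * ‖tdUpdate x r γ f V' s s'‖ ^ 2 +
      4 * K ^ 2 * ((V' s - V s) ^ 2 + (V' s' - V s') ^ 2) := by
  set g := tdUpdate x r γ f V s s'
  set g' := tdUpdate x r γ f V' s s'
  calc ‖g‖ ^ 2
      ≤ (‖g'‖ + ‖g - g'‖) ^ 2 := by
        gcongr
        exact norm_le_norm_add_norm_sub' g g'
    _ ≤ 2 * (‖g'‖ ^ 2 + ‖g - g'‖ ^ 2) := add_sq_le
    _ ≤ _ := by linarith [norm_tdUpdate_sub_sq_le (r := r) hf hγ V V' hx s']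

end Update

theorem td_sample_update_second_moment_general {S E : Type*} [Fintype S]
    [SeminormedAddCommGroup E] [NormedSpace ℝ E] {D : S → ℝ} {P : S → S → ℝ} {x : S → E}
    (r : S → S → ℝ) {γ : ℝ} {f : ℝ → ℝ} {K : ℝ≥0}
    (hD : ∀ s, 0 ≤ D s) (hP : ∀ s s', 0 ≤ P s s') (hP1 : ∀ s, ∑ s', P s s' = 1)
    (hstat : ∀ s', ∑ s, D s * P s s' = D s') (hx : ∀ s, ‖x s‖ ≤ 1) (hγ : |γ| ≤ 1)
    (hf : LipschitzWith K f) (V V' : S → ℝ) :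
    ∑ s, ∑ s', D s * P s s' * ‖tdUpdate x r γ f V s s'‖ ^ 2 ≤
      2 * (∑ s, ∑ s', D s * P s s' * ‖tdUpdate x r γ f V' s s'‖ ^ 2) +
        8 * K ^ 2 * ∑ s, D s * (V' s - V s) ^ 2 :=
  calc ∑ s, ∑ s', D s * P s s' * ‖tdUpdate x r γ f V s s'‖ ^ 2
      ≤ ∑ s, ∑ s', D s * P s s' * (2 * ‖tdUpdate x r γ f V' s s'‖ ^ 2 +
          4 * K ^ 2 * ((V' s - V s) ^ 2 + (V' s' - V s') ^ 2)) := by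
        gcongr with s _ s' _
        · exact mul_nonneg (hD s) (hP s s')
        · exact norm_tdUpdate_sq_le hf hγ V V' (hx s) s'
    _ = 2 * (∑ s, ∑ s', D s * P s s' * ‖tdUpdate x r γ f V' s s'‖ ^ 2) +
          4 * K ^ 2 * ((∑ s, ∑ s', D s * P s s' * (V' s - V s) ^ 2) +
            ∑ s, ∑ s', D s * P s s' * (V' s' - V s') ^ 2) := by
        simp only [mul_add, sum_add_distrib, mul_sum, mul_left_comm]
    _ = _ := by
        rw [sum_sum_mul_of_row_sum_eq_one hP1 fun s => (V' s - V s) ^ 2,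
          sum_sum_mul_of_stationary hstat fun s => (V' s - V s) ^ 2]
        ring

/-- second-moment bound for the sample TD update:
`Σ_{s,s′} D(s)P(s,s′)‖g(w; s, s′)‖² ≤ 2σ² + 8L² Σ_s D(s)⟨x(s), w′ − w⟩²`
where `σ² = Σ_{s,s′} D(s)P(s,s′)‖g(w′; s, s′)‖²`. -/
theorem td_sample_update_second_moment {S : Type*} [Fintype S] [Nonempty S] {d : ℕ}
    (D : S → ℝ) (P : S → S → ℝ) (x : S → EuclideanSpace ℝ (Fin d))
    (r : S → S → ℝ) (γ L : ℝ) (f : ℝ → ℝ)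
    (hD : ∀ s, 0 ≤ D s) (hD1 : ∑ s, D s = 1)
    (hP : ∀ s s', 0 ≤ P s s') (hP1 : ∀ s, ∑ s', P s s' = 1)
    (hstat : ∀ s', ∑ s, D s * P s s' = D s')
    (hx : ∀ s, ‖x s‖ ≤ 1)
    (hγ0 : 0 ≤ γ) (hγ1 : γ < 1) (hL : 1 ≤ L)
    (hf : StrictMono f)
    (hfLip : ∀ a b : ℝ, (1 / L) * |a - b| ≤ |f a - f b| ∧ |f a - f b| ≤ L * |a - b|)
    (w w' : EuclideanSpace ℝ (Fin d)) :
    ∑ s, ∑ s', D s * P s s' * ‖tdSample x r γ f w s s'‖ ^ 2 ≤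
      2 * (∑ s, ∑ s', D s * P s s' * ‖tdSample x r γ f w' s s'‖ ^ 2) +
        8 * L ^ 2 * ∑ s, D s * ⟪x s, w' - w⟫ ^ 2 := by
  lift L to ℝ≥0 using zero_le_one.trans hL
  have hγ : |γ| ≤ 1 := (abs_of_nonneg hγ0).trans_le hγ1.le
  simp only [tdSample_eq_tdUpdate, inner_sub_right]
  exact td_sample_update_second_moment_general r hD hP hP1 hstat hx hγ
    (.of_dist_le_mul fun a b => (hfLip a b).2) (⟪x ·, w⟫) (⟪x ·, w'⟫)
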